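/- Every regular projective correlation of P^3(ℝ) is the product of at most five null polarities: for every C ∈ GL(4,ℝ) with det C > 0, regarded as a correlation of P^3(ℝ), there exist an odd number k with 1 ≤ k ≤ 5, invertible skew-symmetric real 4×4 matrices S₁, …, S_k, and a nonzero λ ∈ ℝ, such that C = λ • (S₁ * S₂ * ⋯ * S_k). -/

import Mathlib

/-!
The space of skew-symmetric `4 × 4` matrices, with the Pfaffian as quadratic form, is the
six-dimensional Klein quadratic space. A correlation `C` acts on it by `S ↦ C * S * Cᵀ`, up to
scalars and the passage to dual Plücker coordinates; since `C.det` is a square, this action can be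
scaled to an orthogonal map, and null polarities give reflections. By the Cartan–Dieudonné theorem
the map is a product of at most six reflections. The Clifford algebra of the Klein quadric acts on
`K ^ 8 = K ^ 4 × K ^ 4` with only the scalars commuting with it, and correlations lift to odd block
matrices; hence the lift of `C` is, up to a scalar, the corresponding product of null polarities,
and by parity the number of factors is odd, thus at most five.
-/

open Matrix
open Module

section CartanDieudonne

variable {K V : Type*} [Field K] [AddCommGroup V] [Module K V]

/-- The reflection in the hyperplane `v^⊥` with respect to the bilinear form `B`; it is the
identity when `B v v = 0`. -/
def orthReflection (B : LinearMap.BilinForm K V) (v : V) : End K V :=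
  preReflection v ((2 / B v v) • B v)

variable {B : LinearMap.BilinForm K V} {F W : Submodule K V} {f : End K V} {v x y : V}

lemma orthReflection_apply (B : LinearMap.BilinForm K V) (v x : V) :
    orthReflection B v x = x - (2 / B v v * B v x) • v := rfl

lemma orthReflection_apply_of_isOrtho (h : B v x = 0) : orthReflection B v x = x := by
  simp [orthReflection_apply, h]

lemma orthReflection_mul_self (hv : B v v ≠ 0) : orthReflection B v * orthReflection B v = 1 := by
  have h : ((2 / B v v) • B v) v = 2 := div_mul_cancel₀ 2 hv
  exact LinearMap.ext (involutive_preReflection h)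

lemma isOrthogonal_orthReflection (hB : B.IsSymm) (hv : B v v ≠ 0) :
    B.IsOrthogonal (orthReflection B v) := by
  intro x y
  simp only [orthReflection_apply, map_sub, map_smul, LinearMap.sub_apply, LinearMap.smul_apply,
    smul_eq_mul, hB.eq x v]
  field_simp
  ring

lemma isOrthogonal_orthReflection_mul (hB : B.IsSymm) (hf : B.IsOrthogonal f)
    (hv : B v v ≠ 0) : B.IsOrthogonal (orthReflection B v * f) := fun x y ↦ by
  rw [End.mul_apply, End.mul_apply, isOrthogonal_orthReflection hB hv, hf]

lemma le_ker_orthReflection_mul_sub_one (hB : B.IsSymm) (hv : v ∈ B.orthogonal F)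
    (hfix : F ≤ LinearMap.ker (f - 1)) : F ≤ LinearMap.ker (orthReflection B v * f - 1) :=
  fun a ha ↦ by
    have hfa : f a = a := sub_eq_zero.1 (hfix ha)
    rw [LinearMap.mem_ker, LinearMap.sub_apply, End.mul_apply, hfa, End.one_apply, sub_eq_zero]
    exact orthReflection_apply_of_isOrtho (by rw [hB.eq]; exact hv a ha)

lemma orthReflection_sub_apply (hB : B.IsSymm) (hxy : B x x = B y y)
    (h : B (x - y) (x - y) ≠ 0) : orthReflection B (x - y) x = y := by
  have hnorm : B (x - y) (x - y) = 2 * B (x - y) x := by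
    simp only [map_sub, LinearMap.sub_apply, hB.eq x y]
    linear_combination -hxy
  rw [orthReflection_apply, div_mul_eq_mul_div, ← hnorm, div_self h, one_smul, sub_sub_cancel]

lemma det_orthReflection [FiniteDimensional K V] (hv : B v v ≠ 0) :
    LinearMap.det (orthReflection B v) = -1 := by
  have h : orthReflection B v = LinearMap.transvection (-((2 / B v v) • B v)) v := by
    ext x
    simp [orthReflection_apply, LinearMap.transvection.apply, sub_eq_add_neg]
  rw [h, LinearMap.transvection.det, LinearMap.neg_apply, LinearMap.smul_apply, smul_eq_mul,
    div_mul_cancel₀ 2 hv]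
  norm_num

lemma det_prod_orthReflection [FiniteDimensional K V] {l : List V} (hl : ∀ v ∈ l, B v v ≠ 0) :
    LinearMap.det (l.map (orthReflection B)).prod = (-1) ^ l.length := by
  induction l with
  | nil => simp
  | cons v l ih =>
    rw [List.forall_mem_cons] at hl
    rw [List.map_cons, List.prod_cons, map_mul, det_orthReflection hl.1, ih hl.2,
      List.length_cons, pow_succ']

lemma det_eq_one_of_isNilpotent_sub_one [FiniteDimensional K V] (h : IsNilpotent (f - 1)) :
    LinearMap.det f = 1 := by
  have hcharpoly := congrArg (Polynomial.eval 1) h.neg.charpoly_eq_X_pow_finrank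
  rwa [LinearMap.eval_charpoly, map_one, neg_sub, sub_sub_cancel, Polynomial.eval_pow,
    Polynomial.eval_X, one_pow] at hcharpoly

lemma apply_eq_zero_of_forall_isotropic [NeZero (2 : K)] (hB : B.IsSymm)
    (hW : ∀ x ∈ W, B x x = 0) (hx : x ∈ W) (hy : y ∈ W) : B x y = 0 := by
  have hxy := hW (x + y) (W.add_mem hx hy)
  simp only [map_add, LinearMap.add_apply, hW x hx, hW y hy, hB.eq y x, zero_add, add_zero,
    ← two_mul] at hxy
  exact (mul_eq_zero_iff_left two_ne_zero).1 hxy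

lemma exists_anisotropic_mem_orthogonal [NeZero (2 : K)] [FiniteDimensional K V] (hB : B.IsSymm)
    (hnd : B.Nondegenerate) (hF : Disjoint F (B.orthogonal F)) (hne : F ≠ ⊤) :
    ∃ x ∈ B.orthogonal F, B x x ≠ 0 := by
  contrapose! hne
  have hle : B.orthogonal F ≤ B.orthogonal (B.orthogonal F) :=
    fun x hx y hy ↦ apply_eq_zero_of_forall_isotropic hB hne hy hx
  rw [LinearMap.BilinForm.orthogonal_orthogonal hnd hB.isRefl] at hle
  rw [← ((LinearMap.BilinForm.isCompl_orthogonal_iff_disjoint hB.isRefl).2 hF).sup_eq_top,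
    sup_of_le_left hle]

lemma disjoint_orthogonal_sup_span_singleton
    (hF : Disjoint F (B.orthogonal F)) (hx : x ∈ B.orthogonal F) (hxx : B x x ≠ 0) :
    Disjoint (F ⊔ K ∙ x) (B.orthogonal (F ⊔ K ∙ x)) := by
  refine Submodule.disjoint_def.2 fun z hz hz' ↦ ?_
  obtain ⟨a, ha, b, hb, rfl⟩ := Submodule.mem_sup.1 hz
  obtain ⟨c, rfl⟩ := Submodule.mem_span_singleton.1 hb
  have ha₀ : a = 0 := by
    refine Submodule.disjoint_def.1 hF a ha fun w hw ↦ ?_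
    have h : B w (a + c • x) = 0 := hz' w (Submodule.mem_sup_left hw)
    rwa [map_add, map_smul, hx w hw, smul_zero, add_zero] at h
  have hc : B x (a + c • x) = 0 :=
    hz' x (Submodule.mem_sup_right (Submodule.mem_span_singleton_self x))
  rw [ha₀, zero_add, map_smul, smul_eq_mul, mul_eq_zero_iff_right hxx] at hc
  rw [ha₀, hc, zero_smul, zero_add]

lemma apply_sub_self_of_isOrthogonal (hB : B.IsSymm) (hf : B.IsOrthogonal f) (x : V) :
    B (f x - x) (f x - x) = 2 * (B x x - B x (f x)) := by
  simp only [map_sub, LinearMap.sub_apply, hB.eq (f x) x, hf x x]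
  ring

lemma surjective_of_isOrthogonal [FiniteDimensional K V] (hnd : B.Nondegenerate)
    (hf : B.IsOrthogonal f) : Function.Surjective f := by
  refine LinearMap.injective_iff_surjective.1 ((injective_iff_map_eq_zero f).2 fun x hx ↦ ?_)
  exact hnd.1 x fun y ↦ by rw [← hf x y, hx, map_zero, LinearMap.zero_apply]

lemma orthogonal_range_sub_one [FiniteDimensional K V] (hnd : B.Nondegenerate)
    (hf : B.IsOrthogonal f) : B.orthogonal (LinearMap.range (f - 1)) = LinearMap.ker (f - 1) := by
  have key (x y : V) : B ((f - 1) y) x = -B (f y) ((f - 1) x) := by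
    simp only [LinearMap.sub_apply, End.one_apply, map_sub, hf y x]
    ring
  ext x
  constructor
  · intro hx
    refine hnd.2 _ fun z ↦ ?_
    obtain ⟨y, rfl⟩ := surjective_of_isOrthogonal hnd hf z
    rw [← neg_eq_zero, ← key]
    exact hx _ (LinearMap.mem_range_self _ y)
  · rintro hx _ ⟨y, rfl⟩
    rw [key, LinearMap.mem_ker.1 hx, map_zero, neg_zero]

lemma apply_mem_orthogonal_of_le_ker_sub_one (hf : B.IsOrthogonal f)
    (hfix : F ≤ LinearMap.ker (f - 1)) (hx : x ∈ B.orthogonal F) : f x ∈ B.orthogonal F := by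
  intro a ha
  have hfa : f a = a := sub_eq_zero.1 (hfix ha)
  rw [← hfa, hf]
  exact hx a ha

/-- The orthogonal maps that escape the inductive step of the Cartan–Dieudonné theorem on `W`: no
anisotropic vector of `W` is fixed, and none can be mapped to its image by a reflection in the
difference. -/
def IsExceptionalOn (B : LinearMap.BilinForm K V) (f : End K V) (W : Submodule K V) : Prop :=
  ∀ x ∈ W, B x x ≠ 0 → f x ≠ x ∧ B (f x - x) (f x - x) = 0

section Exceptional

variable [NeZero (2 : K)]

-- An isotropic `x` with `f x - x` anisotropic would make `x ± f x` anisotropic; the hypothesis for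
-- these two vectors adds up to `B x (f x) = 0`.
lemma IsExceptionalOn.isotropic_sub (hB : B.IsSymm) (hf : B.IsOrthogonal f)
    (h : IsExceptionalOn B f W) (hW : ∀ x ∈ W, f x ∈ W) (hx : x ∈ W) :
    B (f x - x) (f x - x) = 0 := by
  have h2 : (2 : K) ≠ 0 := two_ne_zero
  by_cases hxx : B x x = 0
  · have haniso (z : V) (hz : z ∈ W) (hzz : B z z ≠ 0) : B z z = B z (f z) := by
      have := (h z hz hzz).2
      rwa [apply_sub_self_of_isOrthogonal hB hf, mul_eq_zero_iff_left h2, sub_eq_zero] at this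
    have hplus := haniso (x + f x) (W.add_mem hx (hW x hx))
    have hminus := haniso (x - f x) (W.sub_mem hx (hW x hx))
    simp only [map_add, map_sub, LinearMap.add_apply, LinearMap.sub_apply, hf _ _, hxx,
      hB.eq (f x) x] at hplus hminus
    suffices B x (f x) = 0 by rw [apply_sub_self_of_isOrthogonal hB hf, hxx, this, sub_zero,
      mul_zero]
    by_contra hfx
    have hne : 2 * B x (f x) ≠ 0 := mul_ne_zero h2 hfx
    have hzero : 2 * (2 * B x (f x)) = 0 := by
      linear_combination -hplus (by convert hne using 1; ring) -
        hminus (by convert neg_ne_zero.2 hne using 1; ring)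
    exact mul_ne_zero h2 hne hzero
  · exact (h x hx hxx).2

variable [FiniteDimensional K V]

lemma IsExceptionalOn.range_sub_one_le_ker_sub_one (hB : B.IsSymm) (hnd : B.Nondegenerate)
    (hf : B.IsOrthogonal f) (hF : Disjoint F (B.orthogonal F)) (hfix : F ≤ LinearMap.ker (f - 1))
    (h : IsExceptionalOn B f (B.orthogonal F)) :
    LinearMap.range (f - 1) ≤ LinearMap.ker (f - 1) := by
  have hcompl := (LinearMap.BilinForm.isCompl_orthogonal_iff_disjoint hB.isRefl).2 hF
  have hiso : ∀ z ∈ LinearMap.range (f - 1), B z z = 0 := by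
    rintro _ ⟨x, rfl⟩
    obtain ⟨a, b, ha, hb, rfl⟩ := Submodule.codisjoint_iff_exists_add_eq.1 hcompl.codisjoint x
    rw [map_add, LinearMap.mem_ker.1 (hfix ha), zero_add]
    exact h.isotropic_sub hB hf (fun _ ↦ apply_mem_orthogonal_of_le_ker_sub_one hf hfix) hb
  rw [← orthogonal_range_sub_one hnd hf]
  exact fun x hx y hy ↦ apply_eq_zero_of_forall_isotropic hB hiso hy hx

lemma IsExceptionalOn.det_eq_one (hB : B.IsSymm) (hnd : B.Nondegenerate)
    (hf : B.IsOrthogonal f) (hF : Disjoint F (B.orthogonal F)) (hfix : F ≤ LinearMap.ker (f - 1))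
    (h : IsExceptionalOn B f (B.orthogonal F)) : LinearMap.det f = 1 := by
  refine det_eq_one_of_isNilpotent_sub_one ⟨2, ?_⟩
  rw [sq]
  exact LinearMap.range_le_ker_iff.1 (h.range_sub_one_le_ker_sub_one hB hnd hf hF hfix)

-- With `R = range (f - 1)`, which lies in `R^⊥ = ker (f - 1)`: the space `ker (f - 1) ⊓ F^⊥` is
-- totally isotropic, hence equals `R`, so that `F^⊥` is hyperbolic with Lagrangian subspace `R`.
lemma IsExceptionalOn.finrank_eq (hB : B.IsSymm) (hnd : B.Nondegenerate)
    (hf : B.IsOrthogonal f) (hF : Disjoint F (B.orthogonal F)) (hfix : F ≤ LinearMap.ker (f - 1))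
    (h : IsExceptionalOn B f (B.orthogonal F)) :
    finrank K V = finrank K F + 2 * finrank K (LinearMap.range (f - 1)) := by
  have hcompl := (LinearMap.BilinForm.isCompl_orthogonal_iff_disjoint hB.isRefl).2 hF
  have hker := orthogonal_range_sub_one hnd hf
  have hrange : B.orthogonal (LinearMap.ker (f - 1)) = LinearMap.range (f - 1) := by
    rw [← hker, LinearMap.BilinForm.orthogonal_orthogonal hnd hB.isRefl]
  have hiso : ∀ x ∈ LinearMap.ker (f - 1) ⊓ B.orthogonal F, B x x = 0 := fun x hx ↦ by
    by_contra hxx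
    exact (h x hx.2 hxx).1 (sub_eq_zero.1 hx.1)
  have hsup : F ⊔ LinearMap.ker (f - 1) ⊓ B.orthogonal F = LinearMap.ker (f - 1) := by
    rw [inf_comm, ← sup_inf_assoc_of_le _ hfix, hcompl.sup_eq_top, top_inf_eq]
  have hinf : LinearMap.ker (f - 1) ⊓ B.orthogonal F = LinearMap.range (f - 1) := by
    apply le_antisymm
    · rw [← hrange]
      intro x hx y hy
      obtain ⟨a, ha, b, hb, rfl⟩ := Submodule.mem_sup.1 (hsup.ge hy)
      rw [map_add, LinearMap.add_apply, hx.2 a ha,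
        apply_eq_zero_of_forall_isotropic hB hiso hb hx, add_zero]
    · refine le_inf (h.range_sub_one_le_ker_sub_one hB hnd hf hF hfix) ?_
      rw [← hrange]
      exact LinearMap.BilinForm.orthogonal_le hfix
  have hdim := Submodule.finrank_sup_add_finrank_inf_eq F (LinearMap.range (f - 1))
  rw [← hinf, hsup, (hF.mono_right inf_le_right).eq_bot, finrank_bot, hinf] at hdim
  have := LinearMap.finrank_range_add_finrank_ker (f - 1)
  lia

end Exceptional

/-- `f` is a product of at most `n` reflections in anisotropic vectors of `B`. -/
def IsProdReflections (B : LinearMap.BilinForm K V) (n : ℕ) (f : End K V) : Prop :=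
  ∃ l : List V, l.length ≤ n ∧ (∀ v ∈ l, B v v ≠ 0) ∧ (l.map (orthReflection B)).prod = f

lemma IsProdReflections.mono {m n : ℕ} (h : IsProdReflections B m f) (hmn : m ≤ n) :
    IsProdReflections B n f :=
  h.imp fun _ hl ↦ ⟨hl.1.trans hmn, hl.2⟩

lemma IsProdReflections.of_orthReflection_mul {n : ℕ} (hv : B v v ≠ 0)
    (h : IsProdReflections B n (orthReflection B v * f)) : IsProdReflections B (n + 1) f := by
  obtain ⟨l, hlen, hl, hprod⟩ := h
  refine ⟨v :: l, Nat.succ_le_succ hlen, List.forall_mem_cons.2 ⟨hv, hl⟩, ?_⟩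
  rw [List.map_cons, List.prod_cons, hprod, ← mul_assoc, orthReflection_mul_self hv, one_mul]


section Induction

variable [FiniteDimensional K V]

-- A reflection in `f x - x`, for `x ∈ F^⊥` anisotropic, makes `f` fix `x` without moving `F`.
lemma isProdReflections_of_not_isExceptionalOn (hB : B.IsSymm) (hf : B.IsOrthogonal f)
    (hF : Disjoint F (B.orthogonal F)) (hfix : F ≤ LinearMap.ker (f - 1))
    (ih : ∀ F' > F, Disjoint F' (B.orthogonal F') → ∀ g : End K V, B.IsOrthogonal g →
      F' ≤ LinearMap.ker (g - 1) → IsProdReflections B (finrank K V - finrank K F') g)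
    (h : ¬IsExceptionalOn B f (B.orthogonal F)) :
    IsProdReflections B (finrank K V - finrank K F) f := by
  simp only [IsExceptionalOn, not_forall, not_and_or, not_not] at h
  obtain ⟨x, hx, hxx, hcase⟩ := h
  set F' := F ⊔ K ∙ x
  have hxF' : x ∉ F := fun hxF ↦ by
    rw [Submodule.disjoint_def.1 hF x hxF hx, map_zero] at hxx
    exact hxx rfl
  have hlt : F < F' := left_lt_sup.2 (by rwa [Submodule.span_singleton_le_iff_mem])
  have hdim : finrank K V - finrank K F' + 1 ≤ finrank K V - finrank K F := by
    have := Submodule.finrank_lt_finrank_of_lt hlt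
    have := Submodule.finrank_le F'
    lia
  have hstep (g : End K V) (hg : B.IsOrthogonal g) (hgF : F ≤ LinearMap.ker (g - 1))
      (hgx : g x = x) : IsProdReflections B (finrank K V - finrank K F') g :=
    ih F' hlt (disjoint_orthogonal_sup_span_singleton hF hx hxx) g hg
      (sup_le hgF ((Submodule.span_singleton_le_iff_mem _ _).2 (sub_eq_zero.2 hgx)))
  rcases hcase with hfx | hfx
  · exact (hstep f hf hfix hfx).mono ((Nat.le_succ _).trans hdim)
  · have hv := Submodule.sub_mem _ (apply_mem_orthogonal_of_le_ker_sub_one hf hfix hx) hx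
    exact (IsProdReflections.of_orthReflection_mul hfx (hstep _
      (isOrthogonal_orthReflection_mul hB hf hfx) (le_ker_orthReflection_mul_sub_one hB hv hfix)
      (orthReflection_sub_apply hB (hf x x) hfx))).mono hdim

variable [NeZero (2 : K)]

-- An exceptional `f` has determinant `1` and lives in even codimension; composing it with any
-- reflection destroys exceptionality, and parity saves the additional factor.
lemma isProdReflections_of_le_ker_sub_one (hB : B.IsSymm) (hnd : B.Nondegenerate)
    (hF : Disjoint F (B.orthogonal F)) (hf : B.IsOrthogonal f)
    (hfix : F ≤ LinearMap.ker (f - 1)) : IsProdReflections B (finrank K V - finrank K F) f := by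
  induction F using WellFoundedGT.induction generalizing f with
  | ind F ih =>
  have hgeneric {g : End K V} (hg : B.IsOrthogonal g) (hgfix : F ≤ LinearMap.ker (g - 1)) :=
    isProdReflections_of_not_isExceptionalOn hB hg hF hgfix
      fun F' hF' hdisj _ hg' hfix' ↦ ih F' hF' hdisj hg' hfix'
  by_cases hexc : IsExceptionalOn B f (B.orthogonal F)
  swap
  · exact hgeneric hf hfix hexc
  obtain rfl | hFtop := eq_or_ne F ⊤
  · refine ⟨[], Nat.zero_le _, List.forall_mem_nil _, ?_⟩
    exact (sub_eq_zero.1 (LinearMap.ker_eq_top.1 (top_le_iff.1 hfix))).symm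
  obtain ⟨y, hy, hyy⟩ := exists_anisotropic_mem_orthogonal hB hnd hF hFtop
  have hg := isOrthogonal_orthReflection_mul hB hf hyy
  have hgfix := le_ker_orthReflection_mul_sub_one hB hy hfix
  have hdet : LinearMap.det (orthReflection B y * f) = -1 := by
    rw [map_mul, det_orthReflection hyy, hexc.det_eq_one hB hnd hf hF hfix, mul_one]
  have hneg : (-1 : K) ≠ 1 := fun h ↦ two_ne_zero (by linear_combination -h : (2 : K) = 0)
  obtain ⟨l, hlen, hl, hprod⟩ := hgeneric hg hgfix fun hgexc ↦
    hneg (hdet.symm.trans (hgexc.det_eq_one hB hnd hg hF hgfix))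
  have hodd : Odd l.length := by
    rw [← hprod, det_prod_orthReflection hl] at hdet
    exact (neg_one_pow_eq_neg_one_iff_odd hneg).1 hdet
  have heven := hexc.finrank_eq hB hnd hf hF hfix
  have hlen' : l.length + 1 ≤ finrank K V - finrank K F := by
    obtain ⟨m, hm⟩ := hodd
    lia
  exact (IsProdReflections.of_orthReflection_mul hyy ⟨l, le_rfl, hl, hprod⟩).mono hlen'

theorem cartan_dieudonne (hB : B.IsSymm) (hnd : B.Nondegenerate) (hf : B.IsOrthogonal f) :
    IsProdReflections B (finrank K V) f := by
  simpa using isProdReflections_of_le_ker_sub_one (F := ⊥) hB hnd disjoint_bot_left hf bot_le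

end Induction

end CartanDieudonne

section CliffordRepresentation

variable {K V A : Type*} [Field K] [AddCommGroup V] [Module K V] [Ring A] [Algebra K A]

lemma mul_listProd_of_anticomm {ω : A} {l : List A} (h : ∀ a ∈ l, ω * a = -(a * ω)) :
    ω * l.prod = (-1 : ℤ) ^ l.length • (l.prod * ω) := by
  induction l with
  | nil => simp
  | cons a l ih =>
    rw [List.forall_mem_cons] at h
    rw [List.prod_cons, ← mul_assoc, h.1, neg_mul, mul_assoc, ih h.2, List.length_cons, pow_succ',
      mul_smul, neg_one_smul, mul_smul_comm, mul_assoc]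

variable {B : LinearMap.BilinForm K V} {γ : V →ₗ[K] A} {v : V}

/-- The polarised Clifford relation: `γ` extends to a representation of the Clifford algebra of the
quadratic form `x ↦ B x x / 2`. -/
def IsCliffordMap (B : LinearMap.BilinForm K V) (γ : V →ₗ[K] A) : Prop :=
  ∀ x y, γ x * γ y + γ y * γ x = B x y • (1 : A)

lemma exists_smul_one_of_commute (hcent : Subalgebra.centralizer K (Set.range γ) = ⊥) {a : A}
    (ha : ∀ x, γ x * a = a * γ x) : ∃ c : K, c • (1 : A) = a := by
  have hmem : a ∈ Subalgebra.centralizer K (Set.range γ) :=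
    (Subalgebra.mem_centralizer_iff K).2 (Set.forall_mem_range.2 ha)
  rw [hcent] at hmem
  obtain ⟨c, rfl⟩ := Algebra.mem_bot.1 hmem
  exact ⟨c, (Algebra.algebraMap_eq_smul_one c).symm⟩

namespace IsCliffordMap

lemma isUnit_apply (hγ : IsCliffordMap B γ) (hv : B v v ≠ 0) : IsUnit (γ v) := by
  have h : γ v * ((2 / B v v) • γ v) = 1 := by
    rw [mul_smul_comm, div_eq_inv_mul, mul_smul, two_smul, hγ, inv_smul_smul₀ hv]
  exact isUnit_iff_exists.2 ⟨_, h, by rwa [smul_mul_assoc, ← mul_smul_comm]⟩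

lemma isUnit_prod (hγ : IsCliffordMap B γ) {l : List V} (hl : ∀ v ∈ l, B v v ≠ 0) :
    IsUnit (l.map γ).prod := by
  refine Submonoid.list_prod_mem (IsUnit.submonoid A) fun a ha ↦ ?_
  obtain ⟨v, hv, rfl⟩ := List.mem_map.1 ha
  exact hγ.isUnit_apply (hl v hv)

lemma orthReflection_mul (hγ : IsCliffordMap B γ) (hv : B v v ≠ 0) (x : V) :
    γ (orthReflection B v x) * γ v = -(γ v * γ x) := by
  have hsq : (2 / B v v * B v x) • (γ v * γ v) = B v x • (1 : A) := by
    rw [div_mul_eq_mul_div, mul_div_assoc, mul_comm, mul_smul, two_smul, hγ, smul_smul,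
      div_mul_cancel₀ _ hv]
  rw [orthReflection_apply, map_sub, map_smul, sub_mul, smul_mul_assoc, hsq, ← hγ v x]
  abel

lemma prod_orthReflection_mul (hγ : IsCliffordMap B γ) {l : List V}
    (hl : ∀ v ∈ l, B v v ≠ 0) (x : V) :
    γ ((l.map (orthReflection B)).prod x) * (l.map γ).prod =
      (-1 : K) ^ l.length • ((l.map γ).prod * γ x) := by
  induction l with
  | nil => simp
  | cons v l ih =>
    rw [List.forall_mem_cons] at hl
    simp only [List.map_cons, List.prod_cons, End.mul_apply, List.length_cons]
    rw [← mul_assoc, hγ.orthReflection_mul hl.1, neg_mul, mul_assoc, ih hl.2, pow_succ', mul_smul,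
      neg_one_smul, mul_smul_comm, mul_assoc]

lemma isOrthogonal_of_intertwines [Nontrivial A] (hγ : IsCliffordMap B γ) {f : End K V} {D : A}
    (hD : IsUnit D) (hfD : ∀ x, γ (f x) * D = -(D * γ x)) : B.IsOrthogonal f := by
  intro x y
  have hmul (x y : V) : γ (f x) * γ (f y) * D = D * (γ x * γ y) := by
    rw [mul_assoc, hfD, mul_neg, ← mul_assoc, hfD, neg_mul, neg_neg, mul_assoc]
  have hsmul : B (f x) (f y) • (1 : A) = B x y • (1 : A) := hD.mul_right_cancel <| by
    rw [← hγ, add_mul, hmul, hmul, ← mul_add, hγ, mul_smul_comm, smul_mul_assoc, one_mul, mul_one]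
  exact smul_left_injective K one_ne_zero hsmul

lemma exists_eq_prod_mul (hγ : IsCliffordMap B γ) {l : List V} (hl : ∀ v ∈ l, B v v ≠ 0) {D : A}
    (hD : ∀ x, γ ((l.map (orthReflection B)).prod x) * D = -(D * γ x)) :
    ∃ E, D = (l.map γ).prod * E ∧ ∀ x, E * γ x = -((-1 : K) ^ l.length • (γ x * E)) := by
  have hunit := hγ.isUnit_prod hl
  obtain ⟨E, rfl⟩ := hunit.dvd (a := D)
  refine ⟨E, rfl, fun x ↦ hunit.mul_left_cancel ?_⟩
  rw [← mul_assoc, ← neg_eq_iff_eq_neg.2 (hD x), ← mul_assoc, hγ.prod_orthReflection_mul hl,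
    smul_mul_assoc, mul_assoc, mul_neg, mul_smul_comm]

variable [NeZero (2 : K)]

-- For even length, the factor `E` with `D = G * E` anticommutes with all `γ x`, so that `E * ω` is
-- a scalar and `D` is a multiple of `G * ω`, which commutes with `ω`.
lemma odd_length_of_anticomm [Nontrivial A] (hγ : IsCliffordMap B γ)
    (hcent : Subalgebra.centralizer K (Set.range γ) = ⊥) {ω : A} (hω : ω * ω = 1)
    (hωγ : ∀ x, ω * γ x = -(γ x * ω)) {D : A} (hD : IsUnit D) (hωD : ω * D = -(D * ω))
    {l : List V} (hl : ∀ v ∈ l, B v v ≠ 0)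
    (hlD : ∀ x, γ ((l.map (orthReflection B)).prod x) * D = -(D * γ x)) : Odd l.length := by
  by_contra hodd
  have heven := Nat.not_odd_iff_even.1 hodd
  obtain ⟨E, hE, hEγ⟩ := hγ.exists_eq_prod_mul hl hlD
  simp only [heven.neg_one_pow, one_smul] at hEγ
  obtain ⟨c, hc⟩ := exists_smul_one_of_commute hcent (a := E * ω) fun x ↦ by
    rw [mul_assoc, hωγ, mul_neg, ← mul_assoc, ← mul_assoc, hEγ, neg_mul, neg_neg]
  have hEω : E = c • ω := by rw [← mul_one E, ← hω, ← mul_assoc, ← hc, smul_one_mul]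
  have hωG : ω * (l.map γ).prod = (l.map γ).prod * ω := by
    have := mul_listProd_of_anticomm (List.forall_mem_map.2 fun v (_ : v ∈ l) ↦ hωγ v)
    rwa [List.length_map, heven.neg_one_pow, one_smul] at this
  have hcomm : ω * D = D * ω := by
    rw [hE, hEω, ← mul_assoc, hωG, mul_assoc, mul_assoc, mul_smul_comm, smul_mul_assoc]
  have hzero : (2 : K) • (D * ω) = 0 := by
    rw [two_smul]
    nth_rw 1 [← hcomm]
    rw [hωD, neg_add_cancel]
  have hDω : D * ω = 0 := (smul_eq_zero_iff_right two_ne_zero).1 hzero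
  exact hD.ne_zero (by rw [← mul_one D, ← hω, ← mul_assoc, hDω, zero_mul])

theorem exists_eq_smul_prod [FiniteDimensional K V] [Nontrivial A] (hγ : IsCliffordMap B γ)
    (hB : B.IsSymm) (hnd : B.Nondegenerate)
    (hcent : Subalgebra.centralizer K (Set.range γ) = ⊥) {ω : A} (hω : ω * ω = 1)
    (hωγ : ∀ x, ω * γ x = -(γ x * ω)) {f : End K V} {D : A} (hD : IsUnit D)
    (hωD : ω * D = -(D * ω)) (hfD : ∀ x, γ (f x) * D = -(D * γ x)) :
    ∃ l : List V, l.length ≤ finrank K V ∧ Odd l.length ∧ (∀ v ∈ l, B v v ≠ 0) ∧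
      ∃ c : K, c ≠ 0 ∧ D = c • (l.map γ).prod := by
  obtain ⟨l, hlen, hl, rfl⟩ := cartan_dieudonne hB hnd (hγ.isOrthogonal_of_intertwines hD hfD)
  have hodd := hγ.odd_length_of_anticomm hcent hω hωγ hD hωD hl hfD
  obtain ⟨E, hE, hEγ⟩ := hγ.exists_eq_prod_mul hl hfD
  obtain ⟨c, rfl⟩ := exists_smul_one_of_commute hcent (a := E) fun x ↦ by
    rw [hEγ, hodd.neg_one_pow, neg_one_smul, neg_neg]
  have hD' : D = c • (l.map γ).prod := by rw [hE, mul_smul_comm, mul_one]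
  refine ⟨l, hlen, hodd, hl, c, ?_, hD'⟩
  rintro rfl
  exact hD.ne_zero (by rw [hD', zero_smul])

end IsCliffordMap

end CliffordRepresentation

section Blocks

variable {R n : Type*} [Ring R] [Fintype n] [DecidableEq n]

lemma fromBlocks_one_neg_one_mul_fromBlocks (X Y : Matrix n n R) :
    fromBlocks 1 0 0 (-1) * fromBlocks 0 X Y 0 = -(fromBlocks 0 X Y 0 * fromBlocks 1 0 0 (-1)) := by
  simp [fromBlocks_multiply, fromBlocks_neg]

lemma isUnit_fromBlocks_zero_zero {X Y : Matrix n n R} (hX : IsUnit X) (hY : IsUnit Y) :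
    IsUnit (fromBlocks 0 X Y 0) := by
  obtain ⟨X, rfl⟩ := hX
  obtain ⟨Y, rfl⟩ := hY
  exact isUnit_iff_exists.2 ⟨fromBlocks 0 ↑Y⁻¹ ↑X⁻¹ 0, by simp [fromBlocks_multiply],
    by simp [fromBlocks_multiply]⟩

end Blocks

section KleinQuadric

variable {K : Type*} [Field K]

/-- The skew-symmetric matrix with Plücker coordinates `(p₀₁, p₀₂, p₀₃, p₂₃, p₃₁, p₁₂)`. -/
def pluckerMatrix : (Fin 6 → K) →ₗ[K] Matrix (Fin 4) (Fin 4) K where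
  toFun p := !![0, p 0, p 1, p 2; -p 0, 0, p 5, -p 4; -p 1, -p 5, 0, p 3; -p 2, p 4, -p 3, 0]
  map_add' p q := by simp [add_comm]
  map_smul' c p := by simp

/-- The Plücker coordinates `(M₀₁, M₀₂, M₀₃, M₂₃, M₃₁, M₁₂)` of a skew-symmetric matrix. -/
def pluckerCoords : Matrix (Fin 4) (Fin 4) K →ₗ[K] (Fin 6 → K) where
  toFun M := ![M 0 1, M 0 2, M 0 3, M 2 3, M 3 1, M 1 2]
  map_add' M N := by simp
  map_smul' c M := by simp

/-- The passage to dual Plücker coordinates, exchanging `pᵢⱼ` and `pₖₗ` for `(i, j, k, l)` an even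
permutation. -/
def pluckerDual : (Fin 6 → K) →ₗ[K] (Fin 6 → K) where
  toFun p := ![p 3, p 4, p 5, p 0, p 1, p 2]
  map_add' p q := by simp
  map_smul' c p := by simp

/-- The polar form of the Klein quadric `p₀₁p₂₃ + p₀₂p₃₁ + p₀₃p₁₂`. -/
def kleinForm : LinearMap.BilinForm K (Fin 6 → K) :=
  (dotProductBilin K K).compl₂ pluckerDual

lemma pluckerMatrix_apply (p : Fin 6 → K) : pluckerMatrix p =
    !![0, p 0, p 1, p 2; -p 0, 0, p 5, -p 4; -p 1, -p 5, 0, p 3; -p 2, p 4, -p 3, 0] := rfl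

lemma pluckerCoords_apply (M : Matrix (Fin 4) (Fin 4) K) :
    pluckerCoords M = ![M 0 1, M 0 2, M 0 3, M 2 3, M 3 1, M 1 2] := rfl

lemma pluckerDual_apply (p : Fin 6 → K) : pluckerDual p = ![p 3, p 4, p 5, p 0, p 1, p 2] := rfl

lemma kleinForm_apply (p q : Fin 6 → K) : kleinForm p q = p ⬝ᵥ pluckerDual q := rfl

lemma pluckerDual_pluckerDual (p : Fin 6 → K) : pluckerDual (pluckerDual p) = p := by
  ext i
  fin_cases i <;> rfl

lemma isSymm_kleinForm : (kleinForm (K := K)).IsSymm := by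
  refine ⟨fun p q ↦ ?_⟩
  simp only [kleinForm_apply, pluckerDual_apply, dotProduct, Fin.sum_univ_six, cons_val]
  ring

lemma nondegenerate_kleinForm : (kleinForm (K := K)).Nondegenerate := by
  refine LinearMap.BilinForm.Nondegenerate.ofSeparatingLeft fun p hp ↦
    dotProduct_eq_zero _ fun q ↦ ?_
  rw [← pluckerDual_pluckerDual q]
  exact hp _

lemma transpose_pluckerMatrix (p : Fin 6 → K) : (pluckerMatrix p)ᵀ = -pluckerMatrix p := by
  simp [pluckerMatrix_apply, ← Matrix.ext_iff, Fin.forall_fin_succ]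

lemma pluckerMatrix_pluckerCoords [NeZero (2 : K)] {M : Matrix (Fin 4) (Fin 4) K} (hM : Mᵀ = -M) :
    pluckerMatrix (pluckerCoords M) = M := by
  have hskew (i j : Fin 4) : M j i = -M i j := congr_fun₂ hM i j
  have hdiag (i : Fin 4) : M i i = 0 := by
    have : 2 * M i i = 0 := by linear_combination hskew i i
    exact (mul_eq_zero_iff_left two_ne_zero).1 this
  ext i j
  fin_cases i <;> fin_cases j <;> simp [pluckerMatrix_apply, pluckerCoords_apply, hdiag, hskew 0 1,
    hskew 0 2, hskew 0 3, hskew 1 2, hskew 1 3, hskew 2 3]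

lemma pluckerMatrix_mul_pluckerMatrix_pluckerDual_add (p q : Fin 6 → K) :
    pluckerMatrix p * pluckerMatrix (pluckerDual q) +
      pluckerMatrix q * pluckerMatrix (pluckerDual p) = -kleinForm p q • 1 := by
  ext i j
  simp only [Matrix.add_apply, Matrix.smul_apply, mul_apply, Fin.sum_univ_four,
    pluckerMatrix_apply, pluckerDual_apply, kleinForm_apply, dotProduct, Fin.sum_univ_six,
    cons_val, smul_eq_mul]
  fin_cases i <;> fin_cases j <;> simp <;> ring

lemma isUnit_pluckerMatrix {p : Fin 6 → K} (hp : kleinForm p p ≠ 0) : IsUnit (pluckerMatrix p) := by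
  refine IsUnit.of_mul_eq_one ((-(2 / kleinForm p p)) • pluckerMatrix (pluckerDual p)) ?_
  rw [mul_smul_comm, neg_smul, div_eq_inv_mul, mul_smul, two_smul,
    pluckerMatrix_mul_pluckerMatrix_pluckerDual_add, neg_smul, smul_neg, neg_neg,
    inv_smul_smul₀ hp]

lemma kleinForm_pluckerDual (p q : Fin 6 → K) :
    kleinForm (pluckerDual p) (pluckerDual q) = kleinForm p q := by
  rw [isSymm_kleinForm.eq p q, kleinForm_apply, kleinForm_apply, pluckerDual_pluckerDual,
    dotProduct_comm]

lemma exists_kleinForm_ne_zero [NeZero (2 : K)] : ∃ p : Fin 6 → K, kleinForm p p ≠ 0 := by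
  refine ⟨![1, 0, 0, 1, 0, 0], ?_⟩
  simpa [kleinForm_apply, pluckerDual_apply, one_add_one_eq_two] using two_ne_zero (α := K)

/-- The action `M ↦ C * M * Cᵀ` of a matrix on skew-symmetric matrices, in Plücker coordinates. -/
def pluckerConj (C : Matrix (Fin 4) (Fin 4) K) : (Fin 6 → K) →ₗ[K] (Fin 6 → K) :=
  pluckerCoords ∘ₗ LinearMap.mulLeftRight K (C, Cᵀ) ∘ₗ pluckerMatrix

lemma pluckerConj_apply (C : Matrix (Fin 4) (Fin 4) K) (p : Fin 6 → K) :
    pluckerConj C p = pluckerCoords (C * pluckerMatrix p * Cᵀ) := rfl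

lemma pluckerMatrix_pluckerConj [NeZero (2 : K)] (C : Matrix (Fin 4) (Fin 4) K) (p : Fin 6 → K) :
    pluckerMatrix (pluckerConj C p) = C * pluckerMatrix p * Cᵀ := by
  rw [pluckerConj_apply, pluckerMatrix_pluckerCoords]
  rw [transpose_mul, transpose_mul, transpose_transpose, transpose_pluckerMatrix, neg_mul, mul_neg,
    mul_assoc]

lemma kleinForm_pluckerConj (C : Matrix (Fin 4) (Fin 4) K) (p q : Fin 6 → K) :
    kleinForm (pluckerConj C p) (pluckerConj C q) = C.det * kleinForm p q := by
  simp only [pluckerConj_apply, mul_apply, Fin.sum_univ_four, transpose_apply,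
    pluckerMatrix_apply, pluckerCoords_apply, pluckerDual_apply, kleinForm_apply, dotProduct,
    Fin.sum_univ_six, cons_val, of_apply, cons_val', det_succ_row_zero, Fin.sum_univ_three]
  simp [Fin.succAbove]
  ring

-- With `S = pluckerMatrix`, the difference `Y q` of the two sides satisfies
-- `S p * Y q + S q * Y p = 0`; for anisotropic `p`, this gives first `Y p = 0` and then `Y q = 0`.
lemma transpose_mul_pluckerMatrix_pluckerDual_pluckerConj_mul [NeZero (2 : K)]
    {C : Matrix (Fin 4) (Fin 4) K} (hC : IsUnit C) (q : Fin 6 → K) :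
    Cᵀ * pluckerMatrix (pluckerDual (pluckerConj C q)) * C =
      C.det • pluckerMatrix (pluckerDual q) := by
  set Y : (Fin 6 → K) → Matrix (Fin 4) (Fin 4) K := fun q ↦
    Cᵀ * pluckerMatrix (pluckerDual (pluckerConj C q)) * C - C.det • pluckerMatrix (pluckerDual q)
    with hY
  suffices hzero : Y q = 0 from sub_eq_zero.1 hzero
  have hCY (p q : Fin 6 → K) : C * (pluckerMatrix p * Y q) =
      pluckerMatrix (pluckerConj C p) * pluckerMatrix (pluckerDual (pluckerConj C q)) * C -
        C.det • (C * (pluckerMatrix p * pluckerMatrix (pluckerDual q))) := by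
    simp only [hY, pluckerMatrix_pluckerConj, mul_sub, mul_smul_comm, mul_assoc]
  have hpolar (p q : Fin 6 → K) : pluckerMatrix p * Y q + pluckerMatrix q * Y p = 0 := by
    refine hC.mul_left_cancel ?_
    rw [mul_add, hCY, hCY, sub_add_sub_comm, ← add_mul, ← smul_add, ← mul_add,
      pluckerMatrix_mul_pluckerMatrix_pluckerDual_add,
      pluckerMatrix_mul_pluckerMatrix_pluckerDual_add, kleinForm_pluckerConj, mul_zero,
      smul_mul_assoc, one_mul, mul_smul_comm, mul_one, smul_smul, mul_neg, sub_self]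
  obtain ⟨p, hp⟩ := exists_kleinForm_ne_zero (K := K)
  have hunit := isUnit_pluckerMatrix hp
  have hYp : Y p = 0 := by
    have h := hpolar p p
    rw [← two_smul K, smul_eq_zero_iff_right two_ne_zero] at h
    exact hunit.mul_right_eq_zero.1 h
  have h := hpolar p q
  rw [hYp, mul_zero, add_zero] at h
  exact hunit.mul_right_eq_zero.1 h

/-- The representation of the Clifford algebra of the Klein quadric on `K ^ 8`, by the odd block
matrices built from a skew-symmetric matrix and its dual. -/
def kleinClifford : (Fin 6 → K) →ₗ[K] Matrix (Fin 4 ⊕ Fin 4) (Fin 4 ⊕ Fin 4) K where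
  toFun p := fromBlocks 0 (pluckerMatrix p) (-pluckerMatrix (pluckerDual p)) 0
  map_add' p q := by simp [fromBlocks_add, add_comm]
  map_smul' c p := by simp [fromBlocks_smul]

lemma kleinClifford_apply (p : Fin 6 → K) : kleinClifford p =
    fromBlocks 0 (pluckerMatrix p) (-pluckerMatrix (pluckerDual p)) 0 := rfl

lemma isCliffordMap_kleinClifford : IsCliffordMap kleinForm (kleinClifford (K := K)) := by
  intro p q
  have h₁ := pluckerMatrix_mul_pluckerMatrix_pluckerDual_add p q
  have h₂ := pluckerMatrix_mul_pluckerMatrix_pluckerDual_add (pluckerDual p) (pluckerDual q)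
  rw [pluckerDual_pluckerDual, pluckerDual_pluckerDual, kleinForm_pluckerDual] at h₂
  rw [neg_smul, ← neg_eq_iff_eq_neg, neg_add] at h₁ h₂
  simp only [kleinClifford_apply, fromBlocks_multiply, fromBlocks_add, zero_mul, mul_zero, mul_neg,
    neg_mul, zero_add, add_zero, h₁, h₂]
  rw [← fromBlocks_one, fromBlocks_smul, smul_zero, neg_zero, add_zero]

lemma pluckerMatrix_pluckerCoords_single_sub_single [NeZero (2 : K)] (i j : Fin 4) :
    pluckerMatrix (pluckerCoords (single i j (1 : K) - single j i 1)) =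
      single i j 1 - single j i 1 :=
  pluckerMatrix_pluckerCoords (by simp)

lemma pluckerMatrix_pluckerDual_single_sub_single_apply_eq_zero (i j k : Fin 4) :
    pluckerMatrix (pluckerDual (pluckerCoords (single i j (1 : K) - single j i 1))) i k = 0 := by
  fin_cases i <;> fin_cases j <;> fin_cases k <;>
    simp [pluckerMatrix_apply, pluckerDual_apply, pluckerCoords_apply]

lemma eq_zero_of_mul_pluckerMatrix_pluckerDual [NeZero (2 : K)] {Y Z : Matrix (Fin 4) (Fin 4) K}
    (h : ∀ p, Y * pluckerMatrix (pluckerDual p) = -(pluckerMatrix p * Z)) : Y = 0 := by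
  have hrow (i j k : Fin 4) : (Y * (single i j 1 - single j i 1) : Matrix _ _ K) i k = 0 := by
    rw [← pluckerMatrix_pluckerCoords_single_sub_single,
      ← pluckerDual_pluckerDual (pluckerCoords _), h, neg_apply, mul_apply]
    simp [-map_sub, pluckerMatrix_pluckerDual_single_sub_single_apply_eq_zero]
  have hoff {i j : Fin 4} (hij : i ≠ j) : Y i j = 0 := by
    simpa [mul_sub, mul_single_apply_of_ne, hij, hij.symm] using hrow i j i
  ext i j
  obtain rfl | hij := eq_or_ne i j
  · obtain ⟨j, hij⟩ := exists_ne i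
    simpa [mul_sub, mul_single_apply_of_ne, hij, hij.symm] using hrow i j j
  · exact hoff hij

lemma commute_single_of_commute_pluckerMatrix_mul [NeZero (2 : K)] {X : Matrix (Fin 4) (Fin 4) K}
    (h : ∀ p q, Commute (pluckerMatrix p * pluckerMatrix (pluckerDual q)) X) {i j : Fin 4}
    (hij : i ≠ j) : Commute (single i j 1) X := by
  obtain ⟨k, hki, hkj⟩ : ∃ k, k ≠ i ∧ k ≠ j := by decide +revert
  have hcomm := h (pluckerCoords (single i k 1 - single k i 1))
    (pluckerDual (pluckerCoords (single k j 1 - single j k 1)))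
  rw [pluckerDual_pluckerDual, pluckerMatrix_pluckerCoords_single_sub_single,
    pluckerMatrix_pluckerCoords_single_sub_single] at hcomm
  simpa [mul_sub, sub_mul, hki, hki.symm, hkj, hkj.symm, hij] using hcomm

theorem centralizer_range_kleinClifford [NeZero (2 : K)] :
    Subalgebra.centralizer K (Set.range (kleinClifford (K := K))) = ⊥ := by
  refine eq_bot_iff.2 fun E hE ↦ ?_
  rw [Subalgebra.mem_centralizer_iff, Set.forall_mem_range] at hE
  obtain ⟨X, Y, Z, W, rfl⟩ : ∃ X Y Z W, E = fromBlocks X Y Z W :=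
    ⟨_, _, _, _, (fromBlocks_toBlocks E).symm⟩
  simp only [kleinClifford_apply, fromBlocks_multiply, zero_mul, mul_zero, zero_add, add_zero,
    neg_mul, mul_neg, fromBlocks_inj, neg_inj, forall_and] at hE
  obtain ⟨hYZ, hXW, hWX, -⟩ := hE
  obtain ⟨p, hp⟩ := exists_kleinForm_ne_zero (K := K)
  have hunit := isUnit_pluckerMatrix hp
  obtain rfl : Y = 0 := eq_zero_of_mul_pluckerMatrix_pluckerDual (Z := Z) fun p ↦ by
    rw [hYZ, neg_neg]
  obtain rfl : Z = 0 := hunit.mul_right_eq_zero.1 (by rw [hYZ, zero_mul, neg_zero])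
  have hcomm (p q : Fin 6 → K) : Commute (pluckerMatrix p * pluckerMatrix (pluckerDual q)) X := by
    rw [Commute, SemiconjBy, mul_assoc, hWX, ← mul_assoc, hXW, mul_assoc]
  obtain ⟨c, rfl⟩ := mem_range_scalar_of_commute_single fun i j hij ↦
    commute_single_of_commute_pluckerMatrix_mul hcomm hij
  obtain rfl : W = scalar (Fin 4) c := hunit.mul_left_cancel <| by
    rw [hXW, scalar_commute _ (Commute.all c)]
  refine Algebra.mem_bot.2 ⟨c, ?_⟩
  rw [Algebra.algebraMap_eq_smul_one, ← fromBlocks_one, fromBlocks_smul, smul_zero,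
    smul_one_eq_diagonal, scalar_apply]

lemma kleinClifford_mul_fromBlocks [NeZero (2 : K)] {C : Matrix (Fin 4) (Fin 4) K} {c : K}
    (hc₀ : c ≠ 0) (hc : c * c = C.det) (p : Fin 6 → K) :
    kleinClifford ((c⁻¹ • pluckerConj C ∘ₗ pluckerDual) p) * fromBlocks 0 C (c • (C⁻¹)ᵀ) 0 =
      -(fromBlocks 0 C (c • (C⁻¹)ᵀ) 0 * kleinClifford p) := by
  have hdet : IsUnit C.det := hc ▸ (mul_ne_zero hc₀ hc₀).isUnit
  have hCt : Cᵀ * (C⁻¹)ᵀ = 1 := by rw [← transpose_mul, nonsing_inv_mul C hdet, transpose_one]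
  have hCt' : (C⁻¹)ᵀ * Cᵀ = 1 := by rw [← transpose_mul, mul_nonsing_inv C hdet, transpose_one]
  have htop : pluckerMatrix (c⁻¹ • pluckerConj C (pluckerDual p)) * (c • (C⁻¹)ᵀ) =
      C * pluckerMatrix (pluckerDual p) := by
    rw [map_smul, pluckerMatrix_pluckerConj, smul_mul_smul_comm, inv_mul_cancel₀ hc₀, one_smul,
      mul_assoc, hCt, mul_one]
  have hbot : pluckerMatrix (pluckerDual (c⁻¹ • pluckerConj C (pluckerDual p))) * C =
      c • (C⁻¹)ᵀ * pluckerMatrix p := by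
    have h := congrArg ((C⁻¹)ᵀ * ·)
      (transpose_mul_pluckerMatrix_pluckerDual_pluckerConj_mul
        ((isUnit_iff_isUnit_det C).2 hdet) (pluckerDual p))
    simp only [pluckerDual_pluckerDual, ← mul_assoc, hCt', one_mul, mul_smul_comm] at h
    rw [map_smul, map_smul, smul_mul_assoc, h, ← hc, smul_smul, inv_mul_cancel_left₀ hc₀,
      smul_mul_assoc]
  simp only [LinearMap.smul_apply, LinearMap.comp_apply, kleinClifford_apply, fromBlocks_multiply,
    fromBlocks_neg, zero_mul, mul_zero, zero_add, add_zero, neg_mul, mul_neg, neg_zero, neg_neg,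
    htop, hbot]

/-- The matrices of null polarities of the projective space `P³(K)`. -/
def IsNullPolarity (S : Matrix (Fin 4) (Fin 4) K) : Prop :=
  IsUnit S ∧ Sᵀ = -S

lemma isNullPolarity_pluckerMatrix {p : Fin 6 → K} (hp : kleinForm p p ≠ 0) :
    IsNullPolarity (pluckerMatrix p) :=
  ⟨isUnit_pluckerMatrix hp, transpose_pluckerMatrix p⟩

lemma IsNullPolarity.neg {S : Matrix (Fin 4) (Fin 4) K} (hS : IsNullPolarity S) :
    IsNullPolarity (-S) :=
  ⟨hS.1.neg, by rw [transpose_neg, hS.2]⟩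

lemma exists_isNullPolarity_prod_kleinClifford {l : List (Fin 6 → K)}
    (hl : ∀ p ∈ l, kleinForm p p ≠ 0) :
    ∃ P Q : List (Matrix (Fin 4) (Fin 4) K), P.length = l.length ∧ Q.length = l.length ∧
      (∀ S ∈ P, IsNullPolarity S) ∧ (∀ S ∈ Q, IsNullPolarity S) ∧
      (l.map kleinClifford).prod = if Even l.length then fromBlocks P.prod 0 0 Q.prod
        else fromBlocks 0 P.prod Q.prod 0 := by
  induction l with
  | nil => exact ⟨[], [], by simp⟩
  | cons p l ih =>
    rw [List.forall_mem_cons] at hl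
    obtain ⟨P, Q, hPlen, hQlen, hP, hQ, hprod⟩ := ih hl.2
    have hdual : kleinForm (pluckerDual p) (pluckerDual p) ≠ 0 := by
      rw [kleinForm_pluckerDual]
      exact hl.1
    refine ⟨pluckerMatrix p :: Q, -pluckerMatrix (pluckerDual p) :: P, congrArg (· + 1) hQlen,
      congrArg (· + 1) hPlen, List.forall_mem_cons.2 ⟨isNullPolarity_pluckerMatrix hl.1, hQ⟩,
      List.forall_mem_cons.2 ⟨(isNullPolarity_pluckerMatrix hdual).neg, hP⟩, ?_⟩
    rw [List.map_cons, List.prod_cons, hprod, kleinClifford_apply, List.length_cons]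
    split_ifs <;> simp_all [fromBlocks_multiply, Nat.even_add_one]

theorem exists_list_isNullPolarity_eq_smul_prod [NeZero (2 : K)] {C : Matrix (Fin 4) (Fin 4) K}
    (hC : IsUnit C) (hdet : IsSquare C.det) :
    ∃ P : List (Matrix (Fin 4) (Fin 4) K), Odd P.length ∧ P.length ≤ 5 ∧
      (∀ S ∈ P, IsNullPolarity S) ∧ ∃ lam : K, lam ≠ 0 ∧ C = lam • P.prod := by
  obtain ⟨c, hc⟩ := hdet
  have hc₀ : c ≠ 0 := by
    rintro rfl
    exact ((isUnit_iff_isUnit_det C).1 hC).ne_zero (by rw [hc, zero_mul])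
  have hD : IsUnit (c • (C⁻¹)ᵀ) :=
    (C⁻¹.isUnit_transpose.2 (isUnit_nonsing_inv_iff.2 hC)).smul (Units.mk0 c hc₀)
  obtain ⟨l, hlen, hodd, hl, lam, hlam, hprod⟩ :=
    isCliffordMap_kleinClifford.exists_eq_smul_prod isSymm_kleinForm nondegenerate_kleinForm
      centralizer_range_kleinClifford (ω := fromBlocks 1 0 0 (-1))
      (by simp [fromBlocks_multiply]) (fun _ ↦ fromBlocks_one_neg_one_mul_fromBlocks _ _)
      (isUnit_fromBlocks_zero_zero hC hD) (fromBlocks_one_neg_one_mul_fromBlocks _ _)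
      (kleinClifford_mul_fromBlocks hc₀ hc.symm)
  obtain ⟨P, Q, hPlen, -, hP, -, hPQ⟩ := exists_isNullPolarity_prod_kleinClifford hl
  rw [hPQ, if_neg (Nat.not_even_iff_odd.2 hodd), fromBlocks_smul, fromBlocks_inj] at hprod
  rw [finrank_fin_fun, ← hPlen] at hlen
  rw [← hPlen] at hodd
  refine ⟨P, hodd, ?_, hP, lam, hlam, hprod.2.1⟩
  obtain ⟨m, hm⟩ := hodd
  lia

end KleinQuadric

theorem correlation_eq_product_of_nullPolarities_general {K : Type*} [Field K] [NeZero (2 : K)]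
    (C : Matrix (Fin 4) (Fin 4) K) (hC : IsUnit C) (hdet : IsSquare C.det) :
    ∃ k : ℕ, Odd k ∧ 1 ≤ k ∧ k ≤ 5 ∧
      ∃ S : Fin k → Matrix (Fin 4) (Fin 4) K,
        (∀ i, IsUnit (S i) ∧ (S i)ᵀ = -(S i)) ∧
        ∃ lam : K, lam ≠ 0 ∧ C = lam • (List.ofFn S).prod := by
  obtain ⟨P, hodd, hlen, hP, lam, hlam, hprod⟩ :=
    exists_list_isNullPolarity_eq_smul_prod hC hdet
  refine ⟨P.length, hodd, hodd.pos, hlen, P.get, fun i ↦ hP _ (P.get_mem i), lam, hlam, ?_⟩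
  rwa [List.ofFn_get]

theorem correlation_eq_product_of_nullPolarities (C : Matrix (Fin 4) (Fin 4) ℝ)
    (hC : IsUnit C) (hdet : 0 < C.det) :
    ∃ k : ℕ, Odd k ∧ 1 ≤ k ∧ k ≤ 5 ∧
      ∃ S : Fin k → Matrix (Fin 4) (Fin 4) ℝ,
        (∀ i, IsUnit (S i) ∧ (S i)ᵀ = -(S i)) ∧
        ∃ lam : ℝ, lam ≠ 0 ∧ C = lam • (List.ofFn S).prod :=
  correlation_eq_product_of_nullPolarities_general C hC (Real.isSquare_iff.2 hdet.le)
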